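/- arXiv:1609.07613 — 2 statements merged into one kernel-verified Lean document; each statement's English description precedes it below -/
import Mathlib

section
/- Let k be a field and Λ a finite-dimensional k-algebra. Let K = Hom_k(Λ, k), regarded as a right Λ-module via (f · b)(c) = f(bc) and as a left Λ-module via (a · f)(c) = f(ca). Then K is projective as a right Λ-module if and only if K is projective as a left Λ-module. -/
section

variable (k : Type*) [Field k] (Λ : Type*) [Ring Λ] [Algebra k Λ]

/-- The right `Λ`-module structure on `K = Hom_k(Λ, k)` given by `(f · b)(c) = f (b * c)`,
encoded as a module structure over the opposite ring `Λᵐᵒᵖ`. -/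
noncomputable instance rightDualSMul : SMul Λᵐᵒᵖ (Λ →ₗ[k] k) :=
  ⟨fun b f => f.comp (LinearMap.mulLeft k b.unop)⟩

theorem rightDual_smul_apply (b : Λᵐᵒᵖ) (f : Λ →ₗ[k] k) (c : Λ) :
    (b • f) c = f (b.unop * c) := rfl

noncomputable instance rightDualModule : Module Λᵐᵒᵖ (Λ →ₗ[k] k) where
  one_smul f := LinearMap.ext fun c => by simp [rightDual_smul_apply]
  mul_smul a b f := LinearMap.ext fun c => by
    simp [rightDual_smul_apply, mul_assoc]
  smul_zero a := LinearMap.ext fun c => rfl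
  smul_add a f g := LinearMap.ext fun c => rfl
  add_smul a b f := LinearMap.ext fun c => by
    simp [rightDual_smul_apply, add_mul]
  zero_smul f := LinearMap.ext fun c => by
    simp [rightDual_smul_apply]

/-- The left `Λ`-module structure on `K = Hom_k(Λ, k)` given by `(a · f)(c) = f (c * a)`. -/
noncomputable instance leftDualSMul : SMul Λ (Λ →ₗ[k] k) :=
  ⟨fun a f => f.comp (LinearMap.mulRight k a)⟩

theorem leftDual_smul_apply (a : Λ) (f : Λ →ₗ[k] k) (c : Λ) :
    (a • f) c = f (c * a) := rfl

noncomputable instance leftDualModule : Module Λ (Λ →ₗ[k] k) where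
  one_smul f := LinearMap.ext fun c => by simp [leftDual_smul_apply]
  mul_smul a b f := LinearMap.ext fun c => by
    simp [leftDual_smul_apply, mul_assoc]
  smul_zero a := LinearMap.ext fun c => rfl
  smul_add a f g := LinearMap.ext fun c => rfl
  add_smul a b f := LinearMap.ext fun c => by
    simp [leftDual_smul_apply, mul_add]
  zero_smul f := LinearMap.ext fun c => by
    simp [leftDual_smul_apply]

section

instance leftDual_isScalarTower : IsScalarTower k Λ (Λ →ₗ[k] k) where
  smul_assoc c a f := LinearMap.ext fun d => by simp [leftDual_smul_apply]

variable {k Λ}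

section Transpose

variable [FiniteDimensional k Λ]

/-- The `k`-dual of a left `Λ`-linear map `h : K → Λ`, read as a map `K → Λ` through the
identification of `Λ` with its double dual. -/
noncomputable def dualTranspose (h : (Λ →ₗ[k] k) →ₗ[Λ] Λ) : (Λ →ₗ[k] k) →ₗ[k] Λ :=
  (Module.evalEquiv k Λ).symm.toLinearMap ∘ₗ LinearMap.lcomp k k (h.restrictScalars k)

theorem apply_dualTranspose (h : (Λ →ₗ[k] k) →ₗ[Λ] Λ) (f g : Λ →ₗ[k] k) :
    f (dualTranspose h g) = g (h f) :=
  Module.apply_evalEquiv_symm_apply (R := k) (M := Λ) f _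

theorem eq_of_forall_dual_apply_eq {a b : Λ} (hab : ∀ f : Λ →ₗ[k] k, f a = f b) : a = b :=
  (Module.evalEquiv k Λ).injective (LinearMap.ext hab)

theorem dualTranspose_op_smul (h : (Λ →ₗ[k] k) →ₗ[Λ] Λ) (b : Λᵐᵒᵖ) (g : Λ →ₗ[k] k) :
    dualTranspose h (b • g) = dualTranspose h g * b.unop :=
  eq_of_forall_dual_apply_eq (k := k) fun f => by
    rw [apply_dualTranspose, rightDual_smul_apply, ← leftDual_smul_apply (f := f), apply_dualTranspose,
      map_smul, smul_eq_mul]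

theorem apply_smul_eq_op_dualTranspose_smul (h : (Λ →ₗ[k] k) →ₗ[Λ] Λ) (f g : Λ →ₗ[k] k) :
    h f • g = MulOpposite.op (dualTranspose h g) • f :=
  LinearMap.ext fun c => by
    rw [leftDual_smul_apply, rightDual_smul_apply, MulOpposite.unop_op, ← leftDual_smul_apply (f := f),
      apply_dualTranspose, map_smul, smul_eq_mul]

end Transpose

/-- The left ideal generated by the values on `K · T` of all left `Λ`-linear maps `K → Λ`. -/
def dualTraceIdeal (T : Ideal Λ) : Ideal Λ :=
  Submodule.span Λ {a | ∃ (h : (Λ →ₗ[k] k) →ₗ[Λ] Λ) (f : Λ →ₗ[k] k) (t : Λ),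
    t ∈ T ∧ h (MulOpposite.op t • f) = a}

theorem apply_mem_dualTraceIdeal {T : Ideal Λ} (h : (Λ →ₗ[k] k) →ₗ[Λ] Λ) (f : Λ →ₗ[k] k)
    {t : Λ} (ht : t ∈ T) : h (MulOpposite.op t • f) ∈ dualTraceIdeal (k := k) T :=
  Submodule.subset_span ⟨h, f, t, ht, rfl⟩

theorem dualTraceIdeal_mono : Monotone (dualTraceIdeal (k := k) (Λ := Λ)) := by
  intro S T hST
  refine Submodule.span_mono ?_
  rintro _ ⟨h, f, t, ht, rfl⟩
  exact ⟨h, f, t, hST ht, rfl⟩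

theorem dualTraceIdeal_isTwoSided (T : Ideal Λ) : (dualTraceIdeal (k := k) T).IsTwoSided where
  mul_mem_of_left {a} b ha := by
    have hle : dualTraceIdeal (k := k) T ≤
        Submodule.comap (LinearMap.toSpanSingleton Λ Λ b) (dualTraceIdeal (k := k) T) := by
      refine Submodule.span_le.2 ?_
      rintro _ ⟨h, f, t, ht, rfl⟩
      exact apply_mem_dualTraceIdeal ((LinearMap.toSpanSingleton Λ Λ b) ∘ₗ h) f ht
    exact hle ha

theorem op_smul_leftDual_smul (r : Λ) (b : Λᵐᵒᵖ) (f : Λ →ₗ[k] k) : r • b • f = b • r • f :=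
  LinearMap.ext fun c => by simp [leftDual_smul_apply, rightDual_smul_apply, mul_assoc]

variable [FiniteDimensional k Λ]

theorem dualTranspose_smul_mem {T : Ideal Λ} [T.IsTwoSided] {a : Λ}
    (ha : a ∈ dualTraceIdeal (k := k) T) (h : (Λ →ₗ[k] k) →ₗ[Λ] Λ) (g : Λ →ₗ[k] k) :
    dualTranspose h (a • g) ∈ T := by
  induction ha using Submodule.closure_induction with
  | zero => simp
  | add x y _ _ hx hy => rw [add_smul, map_add]; exact T.add_mem hx hy
  | smul_mem r x hx =>
    obtain ⟨h', f, t, ht, rfl⟩ := hx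
    rw [← map_smul, op_smul_leftDual_smul, apply_smul_eq_op_dualTranspose_smul,
      dualTranspose_op_smul, dualTranspose_op_smul]
    exact T.mul_mem_right _ (T.mul_mem_left _ ht)

theorem exists_dual_basis_leftDual [Module.Projective Λ (Λ →ₗ[k] k)] :
    ∃ (n : ℕ) (x : Fin n → (Λ →ₗ[k] k)) (h : Fin n → ((Λ →ₗ[k] k) →ₗ[Λ] Λ)),
      ∀ y, ∑ i, h i y • x i = y := by
  have : Module.Finite Λ (Λ →ₗ[k] k) := Module.Finite.of_restrictScalars_finite k Λ _
  obtain ⟨n, p, s, -, -, hps⟩ := Module.Finite.exists_comp_eq_id_of_projective Λ (Λ →ₗ[k] k)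
  refine ⟨n, fun i => p (Pi.single i 1), fun i => LinearMap.proj i ∘ₗ s, fun y => ?_⟩
  conv_rhs => rw [← LinearMap.id_apply (R := Λ) y, ← hps, LinearMap.comp_apply,
    LinearMap.pi_apply_eq_sum_univ p (s y)]
  refine Finset.sum_congr rfl fun i _ => ?_
  exact congrArg (fun v => s y i • p v) (funext fun j => by simp [Pi.single_apply, eq_comm])

theorem le_of_dualTraceIdeal_le [Module.Projective Λ (Λ →ₗ[k] k)] {S T : Ideal Λ}
    [T.IsTwoSided] (hST : dualTraceIdeal (k := k) S ≤ dualTraceIdeal (k := k) T) : S ≤ T := by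
  obtain ⟨n, x, h, hx⟩ := exists_dual_basis_leftDual (k := k) (Λ := Λ)
  have hone : ∑ i, dualTranspose (h i) (x i) = 1 :=
    eq_of_forall_dual_apply_eq (k := k) fun f => by
      conv_rhs => rw [← hx f]
      simp [apply_dualTranspose, leftDual_smul_apply, LinearMap.sum_apply]
  intro t ht
  rw [← one_mul t, ← hone, Finset.sum_mul]
  refine T.sum_mem fun i _ => ?_
  rw [← MulOpposite.unop_op t, ← dualTranspose_op_smul, ← hx (MulOpposite.op t • x i), map_sum]
  exact T.sum_mem fun j _ =>
    dualTranspose_smul_mem (hST (apply_mem_dualTraceIdeal (h j) (x i) ht)) _ _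

theorem dualTraceIdeal_top [Module.Projective Λ (Λ →ₗ[k] k)] :
    dualTraceIdeal (k := k) (⊤ : Ideal Λ) = ⊤ := by
  have : IsArtinianRing Λ := IsArtinianRing.of_finite k Λ
  set φ := dualTraceIdeal (k := k) (Λ := Λ)
  have htwo : ∀ n, (φ^[n] ⊤).IsTwoSided
    | 0 => inferInstanceAs (⊤ : Ideal Λ).IsTwoSided
    | n + 1 => by
      rw [Function.iterate_succ_apply']
      exact dualTraceIdeal_isTwoSided _
  have hdesc : ∀ n, φ^[n] ⊤ ≤ φ^[n + 1] ⊤ → ⊤ ≤ φ ⊤ := by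
    intro n
    induction n with
    | zero => exact id
    | succ n ih =>
      intro hn
      rw [Function.iterate_succ_apply' φ n, Function.iterate_succ_apply' φ (n + 1)] at hn
      have := htwo (n + 1)
      exact ih (le_of_dualTraceIdeal_le hn)
  have hanti : Antitone fun n => φ^[n] ⊤ :=
    dualTraceIdeal_mono.antitone_iterate_of_map_le le_top
  obtain ⟨n, hn⟩ := IsArtinian.monotone_stabilizes ⟨fun n => OrderDual.toDual (φ^[n] ⊤), hanti⟩
  exact top_le_iff.1 (hdesc n (hn (n + 1) n.le_succ).ge)

theorem exists_sum_apply_eq_one [Module.Projective Λ (Λ →ₗ[k] k)] :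
    ∃ (n : ℕ) (h : Fin n → ((Λ →ₗ[k] k) →ₗ[Λ] Λ)) (f : Fin n → (Λ →ₗ[k] k)),
      ∑ i, h i (f i) = 1 := by
  have hone : (1 : Λ) ∈ dualTraceIdeal (k := k) (⊤ : Ideal Λ) := by
    rw [dualTraceIdeal_top]; trivial
  obtain ⟨n, r, g, hg⟩ := Submodule.mem_span_set'.1 hone
  choose h f t _ hf using fun i => (g i).2
  refine ⟨n, h, fun i => r i • MulOpposite.op (t i) • f i, ?_⟩
  simpa only [map_smul, hf] using hg

theorem projective_rightDual_of_leftDual [Module.Projective Λ (Λ →ₗ[k] k)] :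
    Module.Projective Λᵐᵒᵖ (Λ →ₗ[k] k) := by
  obtain ⟨n, h, f, hf⟩ := exists_sum_apply_eq_one (k := k) (Λ := Λ)
  let i : (Λ →ₗ[k] k) →ₗ[Λᵐᵒᵖ] (Fin n → Λᵐᵒᵖ) :=
    { toFun := fun g j => MulOpposite.op (dualTranspose (h j) g)
      map_add' := fun g g' => by ext j; simp
      map_smul' := fun b g => by ext j; simp [dualTranspose_op_smul] }
  refine Module.Projective.of_split i (Fintype.linearCombination Λᵐᵒᵖ f) (LinearMap.ext fun g => ?_)
  simp only [LinearMap.comp_apply, Fintype.linearCombination_apply, LinearMap.id_apply]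
  change ∑ j, MulOpposite.op (dualTranspose (h j) g) • f j = g
  simp only [← apply_smul_eq_op_dualTranspose_smul, ← Finset.sum_smul, hf, one_smul]

theorem projective_leftDual_of_rightDual [Module.Projective Λᵐᵒᵖ (Λ →ₗ[k] k)] :
    Module.Projective Λ (Λ →ₗ[k] k) := by
  let u : Λ ≃ₗ[k] Λᵐᵒᵖ := MulOpposite.opLinearEquiv k
  let e : (Λ →ₗ[k] k) ≃ₗ[Λᵐᵒᵖ] (Λᵐᵒᵖ →ₗ[k] k) :=
    { u.congrLeft k k with
      map_smul' := fun b f => LinearMap.ext fun c => rfl }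
  have := RingHomInvPair.of_ringEquiv (RingEquiv.opOp Λ)
  have := RingHomInvPair.of_ringEquiv_symm (RingEquiv.opOp Λ)
  let e' : (Λ →ₗ[k] k) ≃ₛₗ[((RingEquiv.opOp Λ) : Λ →+* Λᵐᵒᵖᵐᵒᵖ)] (Λᵐᵒᵖ →ₗ[k] k) :=
    { u.congrLeft k k with
      map_smul' := fun b f => LinearMap.ext fun c => rfl }
  have : Module.Projective Λᵐᵒᵖ (Λᵐᵒᵖ →ₗ[k] k) := Module.Projective.of_equiv e
  have : Module.Projective Λᵐᵒᵖᵐᵒᵖ (Λᵐᵒᵖ →ₗ[k] k) := projective_rightDual_of_leftDual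
  exact Module.Projective.of_equiv e'.symm

end

/-- For a finite-dimensional algebra `Λ` over a field `k`, the dual `K = Hom_k(Λ, k)` is
projective as a right `Λ`-module if and only if it is projective as a left `Λ`-module. -/
theorem stmt2 [FiniteDimensional k Λ] :
    Module.Projective Λᵐᵒᵖ (Λ →ₗ[k] k) ↔ Module.Projective Λ (Λ →ₗ[k] k) := by
  exact ⟨fun _ => projective_leftDual_of_rightDual, fun _ => projective_rightDual_of_leftDual⟩

end
end

section
/- Let (R, m) be a regular Noetherian local ring of Krull dimension d, and let M be a nonzero finitely generated R-module of finite length. Then Ext^d_R(M, R) ≠ 0. -/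
open CategoryTheory

/-- The vanishing of the derived-functor `Ext` implies the vanishing of the `Ext` group defined
through the derived category. -/
lemma ModuleCat.subsingleton_abelianExt_of_subsingleton_ext {R : Type} [CommRing R]
    (X Y : ModuleCat.{0} R) (n : ℕ)
    (h : Subsingleton (((Ext R (ModuleCat.{0} R) n).obj (Opposite.op X)).obj Y)) :
    Subsingleton (Abelian.Ext X Y n) := by
  let P := CategoryTheory.projectiveResolution X
  have hz : Limits.IsZero ((P.complex.linearYonedaObj R Y).homology n) :=
    (ModuleCat.isZero_of_subsingleton _).of_iso (P.isoExt (R := R) n Y).symm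
  rw [← HomologicalComplex.exactAt_iff_isZero_homology] at hz
  refine subsingleton_of_forall_eq 0 fun α ↦ ?_
  cases n with
  | zero =>
    obtain ⟨f, hf, rfl⟩ := P.extMk_surjective α 1 rfl
    rw [HomologicalComplex.exactAt_iff' _ 0 0 1 (by simp) (by simp),
      ShortComplex.moduleCat_exact_iff] at hz
    obtain ⟨g, hg⟩ := hz f hf
    have hd : (P.complex.linearYonedaObj R Y).d 0 0 = 0 :=
      HomologicalComplex.shape _ _ _ (by simp)
    obtain rfl : f = 0 := hg.symm.trans (congrArg (fun φ ↦ φ.hom g) hd)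
    simp
  | succ p =>
    obtain ⟨f, hf, rfl⟩ := P.extMk_surjective α (p + 2) rfl
    rw [HomologicalComplex.exactAt_iff' _ p (p + 1) (p + 2) (by simp) (by simp),
      ShortComplex.moduleCat_exact_iff] at hz
    exact (P.extMk_eq_zero_iff f _ rfl hf p rfl).mpr (hz f hf)

namespace IsLocalRing

variable {R : Type*} [CommRing R] [IsLocalRing R]

lemma support_eq_zeroLocus_maximalIdeal (M : Type*) [AddCommGroup M] [Module R M]
    [IsNoetherian R M] [IsArtinian R M] [Nontrivial M] :
    Module.support R M = PrimeSpectrum.zeroLocus (maximalIdeal R : Set R) := by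
  apply subset_antisymm
  · obtain ⟨n, hn⟩ := IsArtinian.monotone_stabilizes (R := R) (M := M)
      ⟨fun n ↦ OrderDual.toDual (maximalIdeal R ^ n • ⊤), fun a b hab ↦
        Submodule.smul_mono_left (Ideal.pow_le_pow_right hab)⟩
    have h0 : maximalIdeal R ^ n • (⊤ : Submodule R M) = ⊥ := by
      refine Submodule.eq_bot_of_le_smul_of_le_jacobson_bot (maximalIdeal R) _
        (IsNoetherian.noetherian _) ?_ (maximalIdeal_le_jacobson _)
      rw [← mul_smul, ← pow_succ']
      exact (hn (n + 1) n.le_succ).ge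
    rw [Module.support_eq_zeroLocus, PrimeSpectrum.zeroLocus_subset_zeroLocus_iff]
    refine fun x hx ↦ ⟨n, Module.mem_annihilator.mpr fun m ↦ ?_⟩
    rw [← Submodule.mem_bot R, ← h0]
    exact Submodule.smul_mem_smul (Ideal.pow_mem_pow hx n) trivial
  · exact fun p hp ↦ Module.mem_support_mono (p := closedPoint R) hp (closedPoint_mem_support R M)

lemma ofList_map_mk_eq_maximalIdeal {x : R} {rs : List R}
    (h : Ideal.ofList (x :: rs) = maximalIdeal R) [IsLocalRing (R ⧸ Ideal.span {x})] :
    Ideal.ofList (rs.map (Ideal.Quotient.mk (Ideal.span {x}))) =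
      maximalIdeal (R ⧸ Ideal.span {x}) := by
  have : IsLocalHom (Ideal.Quotient.mk (Ideal.span {x})) :=
    .of_surjective _ Ideal.Quotient.mk_surjective
  rw [← Ideal.map_ofList, ← Ideal.map_comap_of_surjective (Ideal.Quotient.mk (Ideal.span {x}))
    Ideal.Quotient.mk_surjective (maximalIdeal (R ⧸ Ideal.span {x})), maximalIdeal_comap, ← h,
    Ideal.ofList_cons, Ideal.map_sup, Ideal.map_quotient_self, bot_sup_eq]

variable [IsNoetherianRing R]

lemma ringKrullDim_le_length_of_ofList_eq_maximalIdeal {rs : List R}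
    (h : Ideal.ofList rs = maximalIdeal R) : ringKrullDim R ≤ rs.length := by
  classical
  refine (ringKrullDim_le_spanFinrank_maximalIdeal R).trans (Nat.cast_le.mpr ?_)
  have hs : {r | r ∈ rs} = (rs.toFinset : Set R) := by ext; simp
  rw [← h, Ideal.ofList, hs]
  refine (Submodule.spanFinrank_span_le_ncard_of_finite rs.toFinset.finite_toSet).trans ?_
  rw [Set.ncard_coe_finset]
  exact rs.toFinset_card_le

lemma ringKrullDim_le_ringKrullDim_quotient_span_singleton_add_one {x : R}
    (hx : x ∈ maximalIdeal R) : ringKrullDim R ≤ ringKrullDim (R ⧸ Ideal.span {x}) + 1 := by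
  have := ringKrullDim_le_ringKrullDim_quotient_add_card (R := R) {x}
    (by simpa [ringJacobson_eq_maximalIdeal] using hx)
  rw [Finset.coe_singleton] at this
  simpa using this

lemma length_le_ringKrullDim_quotient {x : R} (hx : x ∈ maximalIdeal R) {n : ℕ}
    (hd : ((n + 1 : ℕ) : WithBot ℕ∞) ≤ ringKrullDim R) :
    (n : WithBot ℕ∞) ≤ ringKrullDim (R ⧸ Ideal.span {x}) := by
  have := hd.trans (ringKrullDim_le_ringKrullDim_quotient_span_singleton_add_one hx)
  rw [Nat.cast_add, Nat.cast_one] at this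
  exact (ENat.WithBot.add_le_add_one_right_iff).mp this

/-- A prime `q` with `dim R ⧸ q > n` is contained in `(x)` but does not contain `x`, hence vanishes
by Nakayama's lemma. -/
lemma isDomain_of_isDomain_quotient {x : R} (hx : x ∈ maximalIdeal R)
    [IsDomain (R ⧸ Ideal.span {x})] {n : ℕ} (hn : ringKrullDim (R ⧸ Ideal.span {x}) ≤ n)
    (hd : ((n + 1 : ℕ) : WithBot ℕ∞) ≤ ringKrullDim R) : IsDomain R := by
  obtain ⟨l, hl⟩ := Order.le_krullDim_iff.mp hd
  let q := l.head.asIdeal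
  have hprime : q.IsPrime := l.head.isPrime
  have hdq : ((n + 1 : ℕ) : WithBot ℕ∞) ≤ ringKrullDim (R ⧸ q) := by
    rw [ringKrullDim_quotient, Order.le_krullDim_iff]
    exact ⟨⟨l.length, fun i ↦ ⟨l i, LTSeries.head_le l i⟩, fun i ↦ l.step i⟩, hl⟩
  have not_le : ¬ ((n + 1 : ℕ) : WithBot ℕ∞) ≤ n := by
    rw [Nat.cast_le]; omega
  have hxq : x ∉ q := fun hxq ↦ not_le <| hdq.trans <| (ringKrullDim_le_of_surjective
    (Ideal.Quotient.factor ((Ideal.span_singleton_le_iff_mem q).mpr hxq))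
    (Ideal.Quotient.factor_surjective _)).trans hn
  have : IsLocalRing (R ⧸ q) := .of_surjective' _ Ideal.Quotient.mk_surjective
  have hqx : q ≤ Ideal.span {x} := by
    intro a ha
    by_contra hax
    let x' := Ideal.Quotient.mk q x
    have hx' : x' ∈ maximalIdeal (R ⧸ q) := by
      have : IsLocalHom (Ideal.Quotient.mk q) := .of_surjective _ Ideal.Quotient.mk_surjective
      rwa [← Ideal.mem_comap, maximalIdeal_comap]
    let f : R ⧸ Ideal.span {x} →+* (R ⧸ q) ⧸ Ideal.span {x'} :=
      Ideal.quotientMap _ (Ideal.Quotient.mk q) (by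
        rw [Ideal.span_singleton_le_iff_mem, Ideal.mem_comap]
        exact Ideal.mem_span_singleton_self _)
    have hf : Function.Surjective f := Ideal.quotientMap_surjective Ideal.Quotient.mk_surjective
    have hle := ringKrullDim_succ_le_of_surjective f hf (r := Ideal.Quotient.mk _ a)
      (mem_nonZeroDivisors_of_ne_zero fun h ↦ hax (Ideal.Quotient.eq_zero_iff_mem.mp h))
      (by simp [f, Ideal.quotientMap_mk, Ideal.Quotient.eq_zero_iff_mem.mpr ha])
    exact not_le <| hdq.trans <|
      (ringKrullDim_le_ringKrullDim_quotient_span_singleton_add_one hx').trans (hle.trans hn)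
  have hq : q = ⊥ := by
    refine Submodule.eq_bot_of_le_smul_of_le_jacobson_bot (Ideal.span {x}) q
      (IsNoetherian.noetherian _) (fun a ha ↦ ?_)
      (((Ideal.span_singleton_le_iff_mem _).mpr hx).trans (maximalIdeal_le_jacobson _))
    obtain ⟨b, rfl⟩ := Ideal.mem_span_singleton.mp (hqx ha)
    exact Submodule.smul_mem_smul (Ideal.mem_span_singleton_self x)
      ((hprime.mem_or_mem ha).resolve_left hxq)
  have : (⊥ : Ideal R).IsPrime := hq ▸ hprime
  exact IsDomain.of_bot_isPrime R

/-- A Noetherian local ring whose maximal ideal is generated by `dim R` elements is a domain. -/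
lemma isDomain_of_length_le_ringKrullDim {R : Type*} [CommRing R] [IsLocalRing R]
    [IsNoetherianRing R] (rs : List R) (h : Ideal.ofList rs = maximalIdeal R)
    (hd : (rs.length : WithBot ℕ∞) ≤ ringKrullDim R) : IsDomain R := by
  induction hn : rs.length generalizing R with
  | zero =>
    obtain rfl := List.length_eq_zero_iff.mp hn
    rw [Ideal.ofList_nil] at h
    have : (⊥ : Ideal R).IsPrime := h ▸ (maximalIdeal.isMaximal R).isPrime
    exact IsDomain.of_bot_isPrime R
  | succ n ih =>
    obtain ⟨x, rs, rfl⟩ := List.exists_cons_of_length_eq_add_one hn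
    rw [List.length_cons] at hd hn
    have hx : x ∈ maximalIdeal R := h ▸ Ideal.subset_span (by simp)
    have : Nontrivial (R ⧸ Ideal.span {x}) :=
      Ideal.Quotient.nontrivial_iff.mpr (by rwa [Ne, Ideal.span_singleton_eq_top])
    have : IsLocalRing (R ⧸ Ideal.span {x}) := .of_surjective' _ Ideal.Quotient.mk_surjective
    have hgen := ofList_map_mk_eq_maximalIdeal h
    have := ih _ hgen (by simpa using length_le_ringKrullDim_quotient hx hd) (by simpa using hn)
    exact isDomain_of_isDomain_quotient hx
      (by simpa using ringKrullDim_le_length_of_ofList_eq_maximalIdeal hgen) hd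

/-- In a Noetherian local ring, any `dim R` generators of the maximal ideal form a regular
sequence. -/
lemma isRegular_of_length_le_ringKrullDim {R : Type*} [CommRing R] [IsLocalRing R]
    [IsNoetherianRing R] (rs : List R) (h : Ideal.ofList rs = maximalIdeal R)
    (hd : (rs.length : WithBot ℕ∞) ≤ ringKrullDim R) : RingTheory.Sequence.IsRegular R rs := by
  refine .of_isWeaklyRegular_of_mem_maximalIdeal _ (fun r hr ↦ h ▸ Ideal.subset_span hr) ?_
  induction hn : rs.length generalizing R with
  | zero =>
    obtain rfl := List.length_eq_zero_iff.mp hn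
    exact .nil R R
  | succ n ih =>
    have := isDomain_of_length_le_ringKrullDim rs h hd
    obtain ⟨x, rs, rfl⟩ := List.exists_cons_of_length_eq_add_one hn
    rw [List.length_cons] at hd hn
    have hx : x ∈ maximalIdeal R := h ▸ Ideal.subset_span (by simp)
    have : Nontrivial (R ⧸ Ideal.span {x}) :=
      Ideal.Quotient.nontrivial_iff.mpr (by rwa [Ne, Ideal.span_singleton_eq_top])
    have : IsLocalRing (R ⧸ Ideal.span {x}) := .of_surjective' _ Ideal.Quotient.mk_surjective
    have hx0 : x ≠ 0 := by
      rintro rfl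
      rw [Ideal.ofList_cons, Ideal.span_singleton_zero, bot_sup_eq] at h
      have := hd.trans (ringKrullDim_le_length_of_ofList_eq_maximalIdeal h)
      rw [Nat.cast_le] at this
      omega
    rw [RingTheory.Sequence.isWeaklyRegular_cons_iff]
    refine ⟨IsSMulRegular.of_ne_zero hx0, ?_⟩
    have := ih _ (ofList_map_mk_eq_maximalIdeal h)
      (by simpa using length_le_ringKrullDim_quotient hx hd) (by simpa using hn)
    rw [← Ideal.Quotient.algebraMap_eq,
      RingTheory.Sequence.isWeaklyRegular_map_algebraMap_iff] at this
    refine (LinearEquiv.isWeaklyRegular_congr (Submodule.quotEquivOfEq _ _ ?_) rs).mp this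
    rw [← Submodule.ideal_span_singleton_smul, smul_eq_mul, Ideal.mul_top]

end IsLocalRing

/-- Let `(R, 𝔪)` be a regular Noetherian local ring of Krull dimension `d` (regularity
being expressed by the condition that the maximal ideal `𝔪` is generated by `d`
elements), and let `M` be a nonzero finitely generated `R`-module of finite length.
Then `Ext^d_R(M, R) ≠ 0`. -/
theorem stmt8 (R : Type) [CommRing R] [IsNoetherianRing R] [IsLocalRing R] (d : ℕ)
    (hdim : ringKrullDim R = d)
    (hreg : ∃ s : Finset R, s.card = d ∧
      Ideal.span (s : Set R) = IsLocalRing.maximalIdeal R)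
    (M : Type) [AddCommGroup M] [Module R M] [Module.Finite R M]
    (hM : Nontrivial M) (hlen : IsFiniteLength R M) :
    Nontrivial ((((Ext R (ModuleCat.{0} R) d).obj
      (Opposite.op (ModuleCat.of R M))).obj (ModuleCat.of R R)) : Type) := by
  classical
  by_contra hext
  rw [not_nontrivial_iff_subsingleton] at hext
  obtain ⟨s, hs, hspan⟩ := hreg
  obtain ⟨hN, hA⟩ := isFiniteLength_iff_isNoetherian_isArtinian.mp hlen
  have hgen : Ideal.ofList s.toList = IsLocalRing.maximalIdeal R := by
    rw [← hspan, Ideal.ofList]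
    congr 1
    ext
    simp
  have hlength : s.toList.length = d := by rw [Finset.length_toList, hs]
  have hreg := IsLocalRing.isRegular_of_length_le_ringKrullDim s.toList hgen
    (by rw [hlength, hdim])
  have hsupp := IsLocalRing.support_eq_zeroLocus_maximalIdeal (R := R) M
  have hlt : IsLocalRing.maximalIdeal R • (⊤ : Submodule R R) < ⊤ := by
    rw [smul_eq_mul, Ideal.mul_top, lt_top_iff_ne_top]
    exact Ideal.IsPrime.ne_top'
  have hvanish := ModuleCat.subsingleton_ext_of_exists_isRegular (IsLocalRing.maximalIdeal R)
    (ModuleCat.of R M) hsupp.le (ModuleCat.of R R) hlt s.toList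
    (fun r hr ↦ hgen ▸ Ideal.subset_span hr) hreg
  obtain ⟨rs, hrs, -, hrs'⟩ := ModuleCat.exists_isRegular_of_exists_subsingleton_ext
    (IsLocalRing.maximalIdeal R) (d + 1) (ModuleCat.of R R) hlt (ModuleCat.of R M) hsupp
    fun i hi ↦ (Nat.lt_succ_iff_lt_or_eq.mp hi).elim (fun hi ↦ hvanish i (hlength ▸ hi))
      fun hi ↦ hi ▸ ModuleCat.subsingleton_abelianExt_of_subsingleton_ext _ _ d hext
  have hdim' := ringKrullDim_add_length_eq_ringKrullDim_of_isRegular rs hrs'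
  have : Nontrivial (R ⧸ Ideal.ofList rs) := Ideal.Quotient.nontrivial_iff.mpr fun h ↦
    hrs'.top_ne_smul (by rw [h, Submodule.top_smul])
  have hle : ((d + 1 : ℕ) : WithBot ℕ∞) ≤ d := by
    rw [← hdim, ← hdim', hrs]
    exact le_add_of_nonneg_left ringKrullDim_nonneg_of_nontrivial
  rw [Nat.cast_le] at hle
  omega
end
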